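/- For every integer b ≥ 1, the polynomial P_b satisfies the q-difference equation P_b(q²x,y,z) − P_b(x,y,z) − q^{2−2b}·x·(1−q^{2b})·(1 − q^{2−2b}·y·z)·P_{b−1}(x,y,z) = 0. -/

import Mathlib

noncomputable section

open MvPolynomial

/-- The field `K = ℚ(q)` of rational functions in `q` over `ℚ`. -/
abbrev K : Type := RatFunc ℚ

/-- The variable `q ∈ K = ℚ(q)`. -/
def q : K := RatFunc.X

/-- The polynomial ring `K[x,y,z]`. -/
abbrev P3 : Type := MvPolynomial (Fin 3) K

/-- The polynomials `P_b(x,y,z)`, defined by `P_0 = 1` and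
`P_{b+1}(x,y,z) = (1−z)·P_b(x,y,q^{−2}z) − q^{−2b}·x·(1 − q^{−2b}·y·z)·P_b(x,y,z)`. -/
def P : ℕ → P3
  | 0 => 1
  | b + 1 =>
      (1 - X 2) * (aeval ![(X 0 : P3), X 1, C (q ^ (-2 : ℤ)) * X 2] (P b))
    - C (q ^ (-2 * (b : ℤ))) * X 0 * (1 - C (q ^ (-2 * (b : ℤ))) * X 1 * X 2) * P b

/-!
Write `σ` for `z ↦ q⁻² z`, `τ` for `x ↦ q² x` and `c_n = q^{-2n} x (1 - q^{-2n} y z)`, so that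
`P_{n+1} = (1 - z) σ(P_n) - c_n P_n`. The two substitutions commute, and both carry `c` to `q² c`
up to an index shift: `τ(c_n) = q² c_n` and `σ(c_n) = q² c_{n+1}`. Applying `τ` to the recurrence
for `P_{n+2}` and expanding `τ(P_{n+1})` by induction, these two rules let the factor `q² c_{n+1}`
be pulled out of the correction terms, and what it multiplies is `P_{n+1}` again by the recurrence.
-/

theorem map_succ_eq_of_twisted_recurrence {A Φ : Type*} [CommRing A] [FunLike Φ A A]
    [RingHomClass Φ A A] {σ τ : Φ} {u w : A} {c F : ℕ → A} (hστ : Function.Commute σ τ)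
    (hσu : σ u = u) (hτw : τ w = w) (hσc : ∀ n, σ (c n) = u * c (n + 1))
    (hτc : ∀ n, τ (c n) = u * c n) (hF₀ : τ (F 0) = F 0)
    (hF : ∀ n, F (n + 1) = w * σ (F n) - c n * F n) (n : ℕ) :
    τ (F (n + 1)) = F (n + 1) + (1 - u ^ (n + 1)) * c n * F n := by
  have τ_hF (n : ℕ) : τ (F (n + 1)) = w * σ (τ (F n)) - u * c n * τ (F n) := by
    rw [hF, map_sub, map_mul, map_mul, hτw, hτc, ← hστ (F n)]
  induction n with
  | zero =>
    rw [τ_hF, hF₀, hF]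
    ring
  | succ n ih =>
    have σ_τ_F : σ (τ (F (n + 1))) =
        σ (F (n + 1)) + (1 - u ^ (n + 1)) * (u * c (n + 1)) * σ (F n) := by
      simp only [ih, map_add, map_sub, map_mul, map_one, map_pow, hσu, hσc]
    calc
      τ (F (n + 2))
          = w * σ (F (n + 1)) - u * c (n + 1) * F (n + 1)
              + (1 - u ^ (n + 1)) * (u * c (n + 1)) * (w * σ (F n) - c n * F n) := by
        rw [τ_hF, σ_τ_F, ih]
        ring
      _ = F (n + 2) + (1 - u ^ (n + 2)) * c (n + 1) * F (n + 1) := by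
        rw [← hF n, hF (n + 1)]
        ring

section ScaleVars

variable {ι R : Type*} [CommSemiring R]

/-- The substitution `X i ↦ a i * X i` of a polynomial ring, which expresses both `q`-shifts
occurring in the recurrence and in the `q`-difference equation. -/
def scaleVars (a : ι → R) : MvPolynomial ι R →ₐ[R] MvPolynomial ι R :=
  aeval fun i => C (a i) * X i

lemma scaleVars_X (a : ι → R) (i : ι) : scaleVars a (X i) = C (a i) * X i :=
  aeval_X _ i

lemma scaleVars_C (a : ι → R) (r : R) : scaleVars a (C r) = C r :=
  (scaleVars a).commutes r

lemma commute_scaleVars (a b : ι → R) : Function.Commute (scaleVars a) (scaleVars b) := by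
  have h : (scaleVars a).comp (scaleVars b) = (scaleVars b).comp (scaleVars a) := by
    ext1 i
    simp only [AlgHom.comp_apply, scaleVars_X, scaleVars_C, map_mul]
    ring
  exact DFunLike.congr_fun h

lemma scaleVars_vec3 (a b c : R) :
    scaleVars ![a, b, c] = aeval ![C a * X 0, C b * X 1, C c * X 2] := by
  ext1 i
  fin_cases i <;> simp [scaleVars]

end ScaleVars

lemma q_ne_zero : q ≠ 0 := RatFunc.X_ne_zero

/-- The coefficient `c_n = q^{-2n} x (1 - q^{-2n} y z)` of `P_n` in the recurrence for `P_{n+1}`;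
with `n = b - 1`, it is also the coefficient of `P_{b-1}` in the `q`-difference equation for `P_b`,
up to the factor `1 - q^{2b}`. -/
def recCoeff (n : ℕ) : P3 :=
  C (q ^ (-2 * (n : ℤ))) * X 0 * (1 - C (q ^ (-2 * (n : ℤ))) * X 1 * X 2)

lemma P_succ (n : ℕ) :
    P (n + 1) = (1 - X 2) * scaleVars ![1, 1, q ^ (-2 : ℤ)] (P n) - recCoeff n * P n := by
  simp only [P, recCoeff, scaleVars_vec3, C_1, one_mul]

lemma scaleVars_x_recCoeff (n : ℕ) :
    scaleVars ![q ^ 2, 1, 1] (recCoeff n) = C (q ^ 2) * recCoeff n := by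
  simp only [recCoeff, map_mul, map_sub, map_one, scaleVars_X, scaleVars_C,
    Matrix.cons_val, one_mul]
  ring

lemma scaleVars_z_recCoeff (n : ℕ) :
    scaleVars ![1, 1, q ^ (-2 : ℤ)] (recCoeff n) = C (q ^ 2) * recCoeff (n + 1) := by
  have exponent_succ : q ^ (-2 * ((n + 1 : ℕ) : ℤ)) = q ^ (-2 * (n : ℤ)) * q ^ (-2 : ℤ) := by
    rw [← zpow_add₀ q_ne_zero]
    push_cast
    ring_nf
  have q_sq_cancel : (C (q ^ 2) * C (q ^ (-2 : ℤ)) : P3) = 1 := by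
    rw [← C_mul, ← zpow_natCast, ← zpow_add₀ q_ne_zero]
    simp
  simp only [recCoeff, exponent_succ, map_mul, map_sub, map_one, scaleVars_X, scaleVars_C,
    Matrix.cons_val, one_mul]
  linear_combination
    (-(C (q ^ (-2 * (n : ℤ))) * X 0 *
      (1 - C (q ^ (-2 * (n : ℤ))) * C (q ^ (-2 : ℤ)) * X 1 * X 2))) * q_sq_cancel

lemma scaleVars_x_P_succ (n : ℕ) :
    scaleVars ![q ^ 2, 1, 1] (P (n + 1)) =
      P (n + 1) + (1 - C (q ^ 2) ^ (n + 1)) * recCoeff n * P n :=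
  map_succ_eq_of_twisted_recurrence (w := 1 - X 2) (commute_scaleVars _ _) (scaleVars_C _ _)
    (by simp [scaleVars_X]) scaleVars_z_recCoeff scaleVars_x_recCoeff (by simp [P]) P_succ n

/-- for `b ≥ 1`,
`P_b(q²x,y,z) − P_b(x,y,z) − q^{2−2b}·x·(1−q^{2b})·(1 − q^{2−2b}·y·z)·P_{b−1}(x,y,z) = 0`. -/
theorem P_E42 (b : ℕ) (hb : 1 ≤ b) :
    aeval ![C (q ^ (2 : ℕ)) * (X 0 : P3), X 1, X 2] (P b) - P b
      - C (q ^ (2 - 2 * (b : ℤ)) * (1 - q ^ (2 * b))) * X 0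
          * (1 - C (q ^ (2 - 2 * (b : ℤ))) * X 1 * X 2) * P (b - 1) = 0 := by
  obtain ⟨n, rfl⟩ := Nat.exists_eq_add_of_le' hb
  have exponent : 2 - 2 * ((n + 1 : ℕ) : ℤ) = -2 * (n : ℤ) := by
    push_cast
    ring
  have shift := scaleVars_x_P_succ n
  simp only [scaleVars_vec3, C_1, one_mul, recCoeff] at shift
  rw [shift, exponent, Nat.add_sub_cancel]
  simp only [C_mul, C_sub, C_1, pow_mul, C_pow]
  ring
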